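/- For every α with 0 < α < 2 there exists a constant C_α > 0, depending only on α, such that the following holds. Let β ≥ 0, M > 0, 0 < δ ≤ M/4, and let Ω₀ ⊆ ℝ² be a bounded open set with |Ω₀| ≤ 100 M² that satisfies Ω₀ ∩ {x ∈ [−M,M]² : |x| > δ} = {x ∈ (0,∞)² : β x₂ < x₁} ∩ {x ∈ [−M,M]² : |x| > δ}. For a ∈ [2δ, M/2] define V(a) := lim_{ε→0⁺} ∫_{Ω₀ \ B̄((a,0),ε)} (a−y₁)/((a−y₁)² + y₂²)^{1+α/2} dy₁ dy₂. Then V is differentiable on [2δ, M/2] and |V′(a) + F(α,β)/(α a^{α})| ≤ C_α (1/M^{α} + δ²/a^{2+α}) for every a ∈ [2δ, M/2]. -/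

import Mathlib

open MeasureTheory Real Filter

/-- `F α β = β/(β²+1) − (α/(β²+1)^{1−α/2}) ∫_{−arctan β}^{π/2} cos^α θ dθ`. -/
noncomputable def F (α β : ℝ) : ℝ :=
  β / (β ^ 2 + 1) -
    α / (β ^ 2 + 1) ^ (1 - α / 2) * ∫ θ in (-Real.arctan β)..(Real.pi / 2), Real.cos θ ^ α

/-!
Outside the disk of radius `δ` the patch agrees, inside the square, with the wedge, which the square
cuts off to the region `wedgePatch`. So the velocity at `(a, 0)` is that of the truncated wedge, up
to three integrals over sets at distance at least `a / 2` or `M / 2` from `(a, 0)`. There the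
`a`-derivative of the kernel is at most `(1 + α) (a / 2) ^ (-(2 + α))`, respectively
`(1 + α) (M / 2) ^ (-(2 + α))`, and the areas `O(δ²)` and `O(M²)` give the two error terms.

For the truncated wedge, the kernel is the `y₁`-derivative of a potential, and on each horizontal
slice it is odd about `a`. The removed disk therefore cancels exactly, and the principal value is an
integral over heights of potential differences between the ray `y₁ = β y₂` and the right end.
Differentiating in `a` leaves the kernel integrated along the ray. Over the whole ray this integral
is `-F α β / (α a ^ α)`, by the substitution `u = tan θ`, and the truncation costs `O(M ^ (-α))`.
-/

open scoped Topology

section Kernel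

/-- The Riesz potential `-|z|^(-α) / α` at `z = (x, t)`, the primitive in `x` of `rieszKernel`. -/
noncomputable def rieszPotential (α x t : ℝ) : ℝ :=
  -(x ^ 2 + t ^ 2) ^ (-(α / 2)) / α

/-- The first component of the kernel `z / |z|^(2 + α)` at `z = (x, t)`, written with `|z|²` so that
no square root occurs. It takes the junk value `0` at the singularity `z = 0`. -/
noncomputable def rieszKernel (α x t : ℝ) : ℝ :=
  x / (x ^ 2 + t ^ 2) ^ (1 + α / 2)

/-- The partial derivative of `rieszKernel α x t` in `x`, away from the origin. -/
noncomputable def rieszKernelDeriv (α x t : ℝ) : ℝ :=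
  (x ^ 2 + t ^ 2) ^ (-(1 + α / 2)) - (2 + α) * x ^ 2 * (x ^ 2 + t ^ 2) ^ (-(2 + α / 2))

variable {α x t r : ℝ}

theorem measurable_rieszPotential : Measurable (Function.uncurry (rieszPotential α)) := by
  unfold rieszPotential Function.uncurry
  fun_prop

theorem measurable_rieszKernel : Measurable (Function.uncurry (rieszKernel α)) := by
  unfold rieszKernel Function.uncurry
  fun_prop

theorem measurable_rieszKernelDeriv : Measurable (Function.uncurry (rieszKernelDeriv α)) := by
  unfold rieszKernelDeriv Function.uncurry
  fun_prop

theorem continuousAt_rieszKernel {z : ℝ × ℝ} (hz : 0 < z.1 ^ 2 + z.2 ^ 2) :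
    ContinuousAt (Function.uncurry (rieszKernel α)) z := by
  unfold rieszKernel Function.uncurry
  exact continuousAt_fst.div ((by fun_prop : ContinuousAt (fun z : ℝ × ℝ ↦ z.1 ^ 2 + z.2 ^ 2) z)
    |>.rpow_const (.inl hz.ne')) (rpow_pos_of_pos hz _).ne'

theorem hasDerivAt_sq_add_sq_rpow {p : ℝ} (h : 0 < x ^ 2 + t ^ 2) :
    HasDerivAt (fun x ↦ (x ^ 2 + t ^ 2) ^ p) (2 * p * x * (x ^ 2 + t ^ 2) ^ (p - 1)) x := by
  have hsq : HasDerivAt (fun x : ℝ ↦ x ^ 2 + t ^ 2) (2 * x) x := by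
    simpa using (hasDerivAt_pow 2 x).add_const (t ^ 2)
  exact (hsq.rpow_const (.inl h.ne')).congr_deriv (by ring)

theorem hasDerivAt_rieszPotential (hα : α ≠ 0) (h : 0 < x ^ 2 + t ^ 2) :
    HasDerivAt (fun x ↦ rieszPotential α x t) (rieszKernel α x t) x := by
  refine ((hasDerivAt_sq_add_sq_rpow (p := -(α / 2)) h).neg.div_const α).congr_deriv ?_
  rw [rieszKernel, show -(α / 2) - 1 = -(1 + α / 2) by ring, rpow_neg h.le]
  field_simp

theorem hasDerivAt_rieszKernel (h : 0 < x ^ 2 + t ^ 2) :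
    HasDerivAt (fun x ↦ rieszKernel α x t) (rieszKernelDeriv α x t) x := by
  have hprod := (hasDerivAt_id x).mul (hasDerivAt_sq_add_sq_rpow (p := -(1 + α / 2)) h)
  refine (hprod.congr_of_eventuallyEq (.of_forall fun z ↦ ?_)).congr_deriv ?_
  · simp only [rieszKernel, Pi.mul_apply, id, rpow_neg (add_nonneg (sq_nonneg z) (sq_nonneg t)),
      div_eq_mul_inv]
  · simp only [rieszKernelDeriv, id, show -(1 + α / 2) - 1 = -(2 + α / 2) by ring]
    ring

theorem rpow_neg_half_le_of_sq_le {s p : ℝ} (hr : 0 < r) (hrs : r ^ 2 ≤ s) (hp : 0 ≤ p) :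
    s ^ (-(p / 2)) ≤ r ^ (-p) := by
  calc s ^ (-(p / 2)) ≤ (r ^ 2) ^ (-(p / 2)) :=
        rpow_le_rpow_of_nonpos (by positivity) hrs (by linarith)
    _ = r ^ (-p) := by
        rw [← rpow_natCast_mul hr.le]
        congr 1
        push_cast
        ring

theorem abs_rieszPotential_le (hα : 0 ≤ α) (hr : 0 < r) (h : r ^ 2 ≤ x ^ 2 + t ^ 2) :
    |rieszPotential α x t| ≤ r ^ (-α) / α := by
  have hs : 0 ≤ (x ^ 2 + t ^ 2) ^ (-(α / 2)) := by positivity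
  rw [rieszPotential, abs_div, abs_neg, abs_of_nonneg hs, abs_of_nonneg hα]
  gcongr
  exact rpow_neg_half_le_of_sq_le hr h hα

theorem abs_rieszKernel_le (hα : -1 ≤ α) (hr : 0 < r) (h : r ^ 2 ≤ x ^ 2 + t ^ 2) :
    |rieszKernel α x t| ≤ r ^ (-(1 + α)) := by
  have hs : 0 < x ^ 2 + t ^ 2 := (by positivity : 0 < r ^ 2).trans_le h
  have hx : |x| ≤ (x ^ 2 + t ^ 2) ^ (1 / 2 : ℝ) := by
    rw [← sqrt_eq_rpow]
    exact abs_le_sqrt (le_add_of_nonneg_right (sq_nonneg t))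
  calc |rieszKernel α x t| = |x| * (x ^ 2 + t ^ 2) ^ (-(1 + α / 2)) := by
        rw [rieszKernel, abs_div, abs_of_pos (rpow_pos_of_pos hs _), rpow_neg hs.le, div_eq_mul_inv]
    _ ≤ (x ^ 2 + t ^ 2) ^ (1 / 2 : ℝ) * (x ^ 2 + t ^ 2) ^ (-(1 + α / 2)) := by gcongr
    _ = (x ^ 2 + t ^ 2) ^ (-((1 + α) / 2)) := by
        rw [← rpow_add hs]
        ring_nf
    _ ≤ r ^ (-(1 + α)) := rpow_neg_half_le_of_sq_le hr h (by linarith)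

theorem abs_rieszKernelDeriv_le (hα : 0 ≤ α) (hr : 0 < r) (h : r ^ 2 ≤ x ^ 2 + t ^ 2) :
    |rieszKernelDeriv α x t| ≤ (1 + α) * r ^ (-(2 + α)) := by
  have hs : 0 < x ^ 2 + t ^ 2 := (by positivity : 0 < r ^ 2).trans_le h
  have hsplit : (x ^ 2 + t ^ 2) ^ (-(1 + α / 2)) =
      (x ^ 2 + t ^ 2) * (x ^ 2 + t ^ 2) ^ (-(2 + α / 2)) := by
    rw [← rpow_one_add' hs.le (by linarith)]
    ring_nf
  have hw : 0 < (x ^ 2 + t ^ 2) ^ (-(2 + α / 2)) := rpow_pos_of_pos hs _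
  have hfactor : |t ^ 2 - (1 + α) * x ^ 2| ≤ (1 + α) * (x ^ 2 + t ^ 2) := by
    rw [abs_le]
    constructor <;> nlinarith [sq_nonneg x, sq_nonneg t]
  calc |rieszKernelDeriv α x t|
      = |t ^ 2 - (1 + α) * x ^ 2| * (x ^ 2 + t ^ 2) ^ (-(2 + α / 2)) := by
        rw [rieszKernelDeriv, hsplit, ← abs_of_pos hw, ← abs_mul, abs_of_pos hw]
        ring_nf
    _ ≤ (1 + α) * (x ^ 2 + t ^ 2) * (x ^ 2 + t ^ 2) ^ (-(2 + α / 2)) := by gcongr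
    _ = (1 + α) * (x ^ 2 + t ^ 2) ^ (-((2 + α) / 2)) := by
        rw [mul_assoc, ← hsplit]
        ring_nf
    _ ≤ (1 + α) * r ^ (-(2 + α)) := by
        gcongr
        exact rpow_neg_half_le_of_sq_le hr h (by linarith)

end Kernel

section FarField

theorem sq_sub_le_sq_add_sq {x t h r s : ℝ} (hsr : s ≤ r) (hr : r ^ 2 ≤ x ^ 2 + t ^ 2)
    (hh : |h| ≤ s) : (r - s) ^ 2 ≤ (x + h) ^ 2 + t ^ 2 := by
  set ρ := √(x ^ 2 + t ^ 2)
  have hρ : ρ ^ 2 = x ^ 2 + t ^ 2 := sq_sqrt (by positivity)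
  have hrρ : r ≤ ρ := le_sqrt_of_sq_le hr
  have hx : |x| ≤ ρ := abs_le_sqrt (le_add_of_nonneg_right (sq_nonneg t))
  have hcross : -(ρ * |h|) ≤ x * h := by
    calc -(ρ * |h|) ≤ -(|x| * |h|) := by gcongr
      _ ≤ x * h := by rw [← abs_mul]; exact neg_abs_le _
  calc (r - s) ^ 2 ≤ (ρ - |h|) ^ 2 := by gcongr
    _ = ρ ^ 2 - 2 * (ρ * |h|) + h ^ 2 := by rw [sub_sq, sq_abs]; ring
    _ ≤ (x + h) ^ 2 + t ^ 2 := by rw [hρ]; linarith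

variable {ι : Type*} [MeasurableSpace ι] {μ : Measure ι} [IsFiniteMeasure μ] {X Y : ι → ℝ}
  {α a r : ℝ}

theorem integrable_comp_sub_of_far {k : ℝ → ℝ → ℝ} {C : ℝ} (hk : Measurable (Function.uncurry k))
    (hX : Measurable X) (hY : Measurable Y) (hbound : ∀ x t, r ^ 2 ≤ x ^ 2 + t ^ 2 → |k x t| ≤ C)
    (hfar : ∀ᵐ i ∂μ, r ^ 2 ≤ (a - X i) ^ 2 + Y i ^ 2) :
    Integrable (fun i ↦ k (a - X i) (Y i)) μ :=
  .of_bound (hk.comp ((hX.const_sub a).prodMk hY)).aestronglyMeasurable C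
    (hfar.mono fun _ hi ↦ hbound _ _ hi)

theorem hasDerivAt_integral_comp_sub {k k' : ℝ → ℝ → ℝ} {C C' : ℝ}
    (hk : Measurable (Function.uncurry k)) (hk' : Measurable (Function.uncurry k'))
    (hX : Measurable X) (hY : Measurable Y) (hr : 0 < r)
    (hbound : ∀ x t, (r / 2) ^ 2 ≤ x ^ 2 + t ^ 2 → |k x t| ≤ C)
    (hbound' : ∀ x t, (r / 2) ^ 2 ≤ x ^ 2 + t ^ 2 → |k' x t| ≤ C')
    (hderiv : ∀ x t, 0 < x ^ 2 + t ^ 2 → HasDerivAt (fun x ↦ k x t) (k' x t) x)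
    (hfar : ∀ᵐ i ∂μ, r ^ 2 ≤ (a - X i) ^ 2 + Y i ^ 2) :
    HasDerivAt (fun a ↦ ∫ i, k (a - X i) (Y i) ∂μ) (∫ i, k' (a - X i) (Y i) ∂μ) a := by
  have hnear : ∀ᵐ i ∂μ, ∀ b ∈ Metric.ball a (r / 2), (r / 2) ^ 2 ≤ (b - X i) ^ 2 + Y i ^ 2 := by
    filter_upwards [hfar] with i hi b hb
    have := sq_sub_le_sq_add_sq (by linarith : r / 2 ≤ r) hi (Metric.mem_ball.1 hb).le
    convert this using 2 <;> ring
  have hself : ∀ᵐ i ∂μ, (r / 2) ^ 2 ≤ (a - X i) ^ 2 + Y i ^ 2 :=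
    hnear.mono fun i hi ↦ hi a (Metric.mem_ball_self (half_pos hr))
  refine (hasDerivAt_integral_of_dominated_loc_of_deriv_le
    (Metric.ball_mem_nhds a (half_pos hr))
    (.of_forall fun b ↦ (hk.comp ((hX.const_sub b).prodMk hY)).aestronglyMeasurable)
    (integrable_comp_sub_of_far hk hX hY hbound hself)
    (hk'.comp ((hX.const_sub a).prodMk hY)).aestronglyMeasurable
    (hnear.mono fun i hi b hb ↦ hbound' _ _ (hi b hb)) (integrable_const C')
    (hnear.mono fun i hi b hb ↦ ?_)).2
  exact (hderiv _ _ ((by positivity : 0 < (r / 2) ^ 2).trans_le (hi b hb))).comp_sub_const b (X i)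

theorem integrable_rieszKernel_of_far (hα : -1 ≤ α) (hX : Measurable X) (hY : Measurable Y)
    (hr : 0 < r) (hfar : ∀ᵐ i ∂μ, r ^ 2 ≤ (a - X i) ^ 2 + Y i ^ 2) :
    Integrable (fun i ↦ rieszKernel α (a - X i) (Y i)) μ :=
  integrable_comp_sub_of_far measurable_rieszKernel hX hY
    (fun _ _ h ↦ abs_rieszKernel_le hα hr h) hfar

theorem integrable_rieszPotential_of_far (hα : 0 ≤ α) (hX : Measurable X) (hY : Measurable Y)
    (hr : 0 < r) (hfar : ∀ᵐ i ∂μ, r ^ 2 ≤ (a - X i) ^ 2 + Y i ^ 2) :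
    Integrable (fun i ↦ rieszPotential α (a - X i) (Y i)) μ :=
  integrable_comp_sub_of_far measurable_rieszPotential hX hY
    (fun _ _ h ↦ abs_rieszPotential_le hα hr h) hfar

theorem hasDerivAt_integral_rieszPotential (hα : 0 < α) (hX : Measurable X) (hY : Measurable Y)
    (hr : 0 < r) (hfar : ∀ᵐ i ∂μ, r ^ 2 ≤ (a - X i) ^ 2 + Y i ^ 2) :
    HasDerivAt (fun a ↦ ∫ i, rieszPotential α (a - X i) (Y i) ∂μ)
      (∫ i, rieszKernel α (a - X i) (Y i) ∂μ) a :=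
  hasDerivAt_integral_comp_sub measurable_rieszPotential measurable_rieszKernel hX hY hr
    (fun _ _ h ↦ abs_rieszPotential_le hα.le (half_pos hr) h)
    (fun _ _ h ↦ abs_rieszKernel_le (by linarith) (half_pos hr) h)
    (fun _ _ h ↦ hasDerivAt_rieszPotential hα.ne' h) hfar

theorem hasDerivAt_integral_rieszKernel (hα : 0 ≤ α) (hX : Measurable X) (hY : Measurable Y)
    (hr : 0 < r) (hfar : ∀ᵐ i ∂μ, r ^ 2 ≤ (a - X i) ^ 2 + Y i ^ 2) :
    HasDerivAt (fun a ↦ ∫ i, rieszKernel α (a - X i) (Y i) ∂μ)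
      (∫ i, rieszKernelDeriv α (a - X i) (Y i) ∂μ) a :=
  hasDerivAt_integral_comp_sub measurable_rieszKernel measurable_rieszKernelDeriv hX hY hr
    (fun _ _ h ↦ abs_rieszKernel_le (by linarith) (half_pos hr) h)
    (fun _ _ h ↦ abs_rieszKernelDeriv_le hα (half_pos hr) h)
    (fun _ _ h ↦ hasDerivAt_rieszKernel h) hfar

theorem abs_integral_rieszKernel_le (hα : -1 ≤ α) (hr : 0 < r)
    (hfar : ∀ᵐ i ∂μ, r ^ 2 ≤ (a - X i) ^ 2 + Y i ^ 2) :
    |∫ i, rieszKernel α (a - X i) (Y i) ∂μ| ≤ r ^ (-(1 + α)) * μ.real Set.univ := by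
  rw [← norm_eq_abs]
  exact norm_integral_le_of_norm_le_const (hfar.mono fun _ hi ↦ abs_rieszKernel_le hα hr hi)

theorem abs_integral_rieszKernelDeriv_le (hα : 0 ≤ α) (hr : 0 < r)
    (hfar : ∀ᵐ i ∂μ, r ^ 2 ≤ (a - X i) ^ 2 + Y i ^ 2) :
    |∫ i, rieszKernelDeriv α (a - X i) (Y i) ∂μ| ≤ (1 + α) * r ^ (-(2 + α)) * μ.real Set.univ := by
  rw [← norm_eq_abs]
  exact norm_integral_le_of_norm_le_const (hfar.mono fun _ hi ↦ abs_rieszKernelDeriv_le hα hr hi)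

end FarField

section PrincipalValue

/-- The closed Euclidean disk of radius `r` centered at `(c, 0)`. It is not a `Metric.closedBall`,
as `ℝ × ℝ` carries the supremum distance. -/
def axisDisk (c r : ℝ) : Set (ℝ × ℝ) :=
  {y | (y.1 - c) ^ 2 + y.2 ^ 2 ≤ r ^ 2}

/-- The square `[-M, M]²`. -/
def centeredSquare (M : ℝ) : Set (ℝ × ℝ) :=
  Set.Icc (-M) M ×ˢ Set.Icc (-M) M

/-- `v` is the principal value at `(a, 0)` of the integral over `S` of the kernel centered at
`(a, 0)`, that is, the limit of the integrals over `S` with shrinking disks removed. -/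
def HasPrincipalValue (α : ℝ) (S : Set (ℝ × ℝ)) (a v : ℝ) : Prop :=
  Tendsto (fun ε ↦ ∫ y in S \ axisDisk a ε, rieszKernel α (a - y.1) y.2) (𝓝[>] 0) (𝓝 v)

variable {α a r v w : ℝ} {S T : Set (ℝ × ℝ)}

theorem measurableSet_axisDisk (c r : ℝ) : MeasurableSet (axisDisk c r) :=
  measurableSet_le (by fun_prop) measurable_const

theorem sq_lt_of_notMem_axisDisk {y : ℝ × ℝ} (hy : y ∉ axisDisk a r) :
    r ^ 2 < (a - y.1) ^ 2 + y.2 ^ 2 := by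
  rw [sub_sq_comm]
  exact not_le.1 hy

theorem axisDisk_zero_subset_centeredSquare {M : ℝ} (hr : |r| ≤ M) :
    axisDisk 0 r ⊆ centeredSquare M := by
  intro y hy
  have hy' : y.1 ^ 2 + y.2 ^ 2 ≤ r ^ 2 := by
    simpa only [axisDisk, Set.mem_ofPred_eq, sub_zero] using hy
  have h₁ : |y.1| ≤ |r| := sq_le_sq.1 ((le_add_of_nonneg_right (sq_nonneg _)).trans hy')
  have h₂ : |y.2| ≤ |r| := sq_le_sq.1 ((le_add_of_nonneg_left (sq_nonneg _)).trans hy')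
  exact ⟨abs_le.1 (h₁.trans hr), abs_le.1 (h₂.trans hr)⟩

theorem volume_axisDisk_zero_le : volume (axisDisk 0 r) ≤ ENNReal.ofReal (4 * r ^ 2) := by
  refine (measure_mono (axisDisk_zero_subset_centeredSquare le_rfl)).trans_eq ?_
  rw [centeredSquare, Measure.volume_eq_prod, Measure.prod_prod, volume_Icc, sub_neg_eq_add,
    ← ENNReal.ofReal_mul (by positivity), ← sq_abs r]
  ring_nf

theorem integrableOn_rieszKernel_sdiff_axisDisk (hα : -1 ≤ α) (hS : volume S ≠ ⊤) (hr : 0 < r) :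
    IntegrableOn (fun y : ℝ × ℝ ↦ rieszKernel α (a - y.1) y.2) (S \ axisDisk a r) := by
  have : IsFiniteMeasure (volume.restrict (S \ axisDisk a r)) :=
    isFiniteMeasure_restrict.2 (measure_ne_top_of_subset Set.sdiff_subset hS)
  refine integrable_rieszKernel_of_far hα measurable_fst measurable_snd hr ?_
  refine ae_restrict_of_ae_restrict_of_subset (Set.sdiff_subset_compl _ _) ?_
  filter_upwards [ae_restrict_mem (measurableSet_axisDisk a r).compl] with y hy
  exact (sq_lt_of_notMem_axisDisk hy).le

theorem hasPrincipalValue_of_far (hr : 0 < r) (hS : ∀ y ∈ S, r ^ 2 ≤ (a - y.1) ^ 2 + y.2 ^ 2) :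
    HasPrincipalValue α S a (∫ y in S, rieszKernel α (a - y.1) y.2) := by
  refine tendsto_const_nhds.congr' ?_
  filter_upwards [Ioo_mem_nhdsGT hr] with ε hε
  have hdisj : Disjoint S (axisDisk a ε) := by
    refine Set.disjoint_left.2 fun y hyS hy ↦ (hS y hyS).not_gt ?_
    calc (a - y.1) ^ 2 + y.2 ^ 2 ≤ ε ^ 2 := by rw [sub_sq_comm]; exact hy
      _ < r ^ 2 := pow_lt_pow_left₀ hε.2 hε.1.le two_ne_zero
  rw [hdisj.sdiff_eq_left]

theorem HasPrincipalValue.union (hS : HasPrincipalValue α S a v) (hT : HasPrincipalValue α T a w)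
    (hα : -1 ≤ α) (hST : Disjoint S T) (hTm : MeasurableSet T) (hSv : volume S ≠ ⊤)
    (hTv : volume T ≠ ⊤) : HasPrincipalValue α (S ∪ T) a (v + w) := by
  refine (hS.add hT).congr' ?_
  filter_upwards [self_mem_nhdsWithin] with ε hε
  rw [Set.union_sdiff_distrib, setIntegral_union (hST.mono Set.sdiff_subset Set.sdiff_subset)
    (hTm.diff (measurableSet_axisDisk a ε)) (integrableOn_rieszKernel_sdiff_axisDisk hα hSv hε)
    (integrableOn_rieszKernel_sdiff_axisDisk hα hTv hε)]

theorem HasPrincipalValue.sdiff (hS : HasPrincipalValue α S a v) (hT : HasPrincipalValue α T a w)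
    (hα : -1 ≤ α) (hTS : T ⊆ S) (hTm : MeasurableSet T) (hSv : volume S ≠ ⊤) :
    HasPrincipalValue α (S \ T) a (v - w) := by
  refine (hS.sub hT).congr' ?_
  filter_upwards [self_mem_nhdsWithin] with ε hε
  rw [← setIntegral_sdiff (hTm.diff (measurableSet_axisDisk a ε))
    (integrableOn_rieszKernel_sdiff_axisDisk hα hSv hε) (Set.sdiff_subset_sdiff_left hTS)]
  congr 2
  ext y
  simp only [Set.mem_sdiff]
  tauto

end PrincipalValue

section Slices

variable {α a t p q ε : ℝ}

theorem continuous_rieszKernel_sub_left (ht : t ≠ 0) :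
    Continuous fun x ↦ rieszKernel α (a - x) t :=
  continuous_iff_continuousAt.2 fun x ↦
    (continuousAt_rieszKernel (z := (a - x, t)) (by positivity)).comp
      (f := fun x ↦ (a - x, t)) (by fun_prop)

theorem intervalIntegral_rieszKernel_sub_left (hα : α ≠ 0) (ht : t ≠ 0) :
    ∫ x in p..q, rieszKernel α (a - x) t =
      rieszPotential α (a - p) t - rieszPotential α (a - q) t := by
  rw [intervalIntegral.integral_comp_sub_left (fun x ↦ rieszKernel α x t)]
  refine intervalIntegral.integral_eq_sub_of_hasDerivAt
    (fun x _ ↦ hasDerivAt_rieszPotential hα (by positivity)) ?_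
  have hcont := continuous_rieszKernel_sub_left (α := α) (a := 0) ht |>.comp continuous_neg
  simpa only [Function.comp_def, zero_sub, neg_neg] using hcont.intervalIntegrable (a - q) (a - p)

theorem rieszKernel_neg (x : ℝ) : rieszKernel α (-x) t = -rieszKernel α x t := by
  rw [rieszKernel, rieszKernel, neg_sq, neg_div]

theorem measurableSet_axisDisk_slice : MeasurableSet {x | (x, t) ∈ axisDisk a ε} :=
  measurable_prodMk_right (measurableSet_axisDisk a ε)

/-- The slice is symmetric about `a`, about which the kernel is odd. -/
theorem integral_rieszKernel_axisDisk_slice :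
    ∫ x in {x | (x, t) ∈ axisDisk a ε}, rieszKernel α (a - x) t = 0 := by
  set g := Set.indicator {x | (x, t) ∈ axisDisk a ε} fun x ↦ rieszKernel α (a - x) t with hg
  have hodd (x : ℝ) : g (2 * a - x) = -g x := by
    have hmem : 2 * a - x ∈ {x | (x, t) ∈ axisDisk a ε} ↔ x ∈ {x | (x, t) ∈ axisDisk a ε} := by
      simp only [axisDisk, Set.mem_ofPred_eq, show (2 * a - x - a) ^ 2 = (x - a) ^ 2 by ring]
    by_cases hx : x ∈ {x | (x, t) ∈ axisDisk a ε}
    · rw [hg, Set.indicator_of_mem (hmem.2 hx), Set.indicator_of_mem hx, ← rieszKernel_neg]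
      ring_nf
    · rw [hg, Set.indicator_of_notMem (mt hmem.1 hx), Set.indicator_of_notMem hx, neg_zero]
  rw [← integral_indicator measurableSet_axisDisk_slice]
  have : ∫ x, g x = -∫ x, g x := by
    rw [← integral_neg, ← integral_sub_left_eq_self g volume (2 * a)]
    simp only [hodd]
  linarith

theorem integral_rieszKernel_Ioc_sdiff_axisDisk_slice (hα : α ≠ 0) (ht : t ≠ 0) (hpq : p ≤ q)
    (hsub : {x | (x, t) ∈ axisDisk a ε} ⊆ Set.Ioc p q) :
    ∫ x in Set.Ioc p q \ {x | (x, t) ∈ axisDisk a ε}, rieszKernel α (a - x) t =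
      rieszPotential α (a - p) t - rieszPotential α (a - q) t := by
  rw [setIntegral_sdiff measurableSet_axisDisk_slice
    (continuous_rieszKernel_sub_left ht).integrableOn_Ioc hsub,
    integral_rieszKernel_axisDisk_slice, sub_zero, ← intervalIntegral.integral_of_le hpq,
    intervalIntegral_rieszKernel_sub_left hα ht]

theorem setIntegral_prod_eq_integral_slice {f : ℝ × ℝ → ℝ} {S : Set (ℝ × ℝ)}
    (hS : MeasurableSet S) (hf : IntegrableOn f S) :
    ∫ y in S, f y = ∫ t, ∫ x in {x | (x, t) ∈ S}, f (x, t) := by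
  rw [← integral_indicator hS, Measure.volume_eq_prod,
    integral_prod_symm _ (hf.integrable_indicator hS)]
  refine integral_congr_ae (.of_forall fun t ↦ ?_)
  exact integral_indicator (f := fun x ↦ f (x, t)) (measurable_prodMk_right hS)

end Slices

section Trapezoid

/-- The part of the wedge `β y₂ < y₁`, `0 < y₂` below height `T` and to the left of `y₁ = M`. -/
def trapezoid (β T M : ℝ) : Set (ℝ × ℝ) :=
  {y | y.2 ∈ Set.Ioc 0 T ∧ y.1 ∈ Set.Ioc (β * y.2) M}

/-- The principal value at `(a, 0)` of the kernel integral over `trapezoid β T M`, after integration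
along horizontal slices; see `hasPrincipalValue_trapezoid`. -/
noncomputable def trapezoidVelocity (α β T M a : ℝ) : ℝ :=
  ∫ t in Set.Ioc 0 T, (rieszPotential α (a - β * t) t - rieszPotential α (a - M) t)

variable {α β T M a ε r t : ℝ}

theorem measurableSet_trapezoid : MeasurableSet (trapezoid β T M) :=
  (measurable_snd measurableSet_Ioc).inter
    ((measurableSet_lt (by fun_prop) measurable_fst).inter
      (measurableSet_le measurable_fst measurable_const))

theorem trapezoid_subset_rectangle (hβ : 0 ≤ β) :
    trapezoid β T M ⊆ Set.Icc 0 M ×ˢ Set.Icc 0 T := by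
  rintro y ⟨⟨hy0, hyT⟩, hyβ, hyM⟩
  exact ⟨⟨(mul_nonneg hβ hy0.le).trans hyβ.le, hyM⟩, hy0.le, hyT⟩

theorem volume_trapezoid_ne_top (hβ : 0 ≤ β) : volume (trapezoid β T M) ≠ ⊤ :=
  measure_ne_top_of_subset (trapezoid_subset_rectangle hβ)
    (isCompact_Icc.prod isCompact_Icc).measure_lt_top.ne

theorem axisDisk_slice_subset_Ioc (hβ : 0 ≤ β) (hε : 0 < ε) (hleft : β * ε < a - ε)
    (hright : a + ε ≤ M) : {x | (x, t) ∈ axisDisk a ε} ⊆ Set.Ioc (β * t) M := by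
  intro x hx
  have hdisk : (x - a) ^ 2 + t ^ 2 ≤ ε ^ 2 := hx
  have hxa := abs_le_of_sq_le_sq' ((le_add_of_nonneg_right (sq_nonneg t)).trans hdisk) hε.le
  have htε := abs_le_of_sq_le_sq' ((le_add_of_nonneg_left (sq_nonneg _)).trans hdisk) hε.le
  exact ⟨by linarith [mul_le_mul_of_nonneg_left htε.2 hβ], by linarith⟩

theorem setIntegral_rieszKernel_trapezoid_sdiff_axisDisk (hα : 0 < α) (hβ : 0 ≤ β)
    (hβT : β * T ≤ M) (hε : 0 < ε) (hleft : β * ε < a - ε) (hright : a + ε ≤ M) :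
    ∫ y in trapezoid β T M \ axisDisk a ε, rieszKernel α (a - y.1) y.2 =
      trapezoidVelocity α β T M a := by
  have hslice (t : ℝ) : {x | (x, t) ∈ trapezoid β T M \ axisDisk a ε} =
      {x | t ∈ Set.Ioc 0 T ∧ x ∈ Set.Ioc (β * t) M \ {x | (x, t) ∈ axisDisk a ε}} := by
    ext x
    exact and_assoc
  rw [setIntegral_prod_eq_integral_slice
    (measurableSet_trapezoid.diff (measurableSet_axisDisk a ε))
    (integrableOn_rieszKernel_sdiff_axisDisk (by linarith) (volume_trapezoid_ne_top hβ) hε),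
    trapezoidVelocity, ← setIntegral_eq_integral_of_forall_compl_eq_zero (s := Set.Ioc 0 T)]
  · refine setIntegral_congr_fun measurableSet_Ioc fun t ht ↦ ?_
    have hβt : β * t ≤ M := (mul_le_mul_of_nonneg_left ht.2 hβ).trans hβT
    simp only [hslice, ht, true_and, Set.ofPred_mem_eq]
    exact integral_rieszKernel_Ioc_sdiff_axisDisk_slice hα.ne' ht.1.ne' hβt
      (axisDisk_slice_subset_Ioc hβ hε hleft hright)
  · intro t ht
    simp only [hslice, ht, false_and, Set.ofPred_false, setIntegral_empty]

theorem hasPrincipalValue_trapezoid (hα : 0 < α) (hβ : 0 ≤ β) (hβT : β * T ≤ M) (ha : 0 < a)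
    (haM : a < M) : HasPrincipalValue α (trapezoid β T M) a (trapezoidVelocity α β T M a) := by
  refine tendsto_const_nhds.congr' ?_
  have hpos : 0 < min (a / (1 + β)) (M - a) := lt_min (by positivity) (sub_pos.2 haM)
  filter_upwards [Ioo_mem_nhdsGT hpos] with ε ⟨hε, hεlt⟩
  have hleft : ε * (1 + β) < a := (lt_div_iff₀ (by positivity)).1 (hεlt.trans_le (min_le_left _ _))
  have hright : ε < M - a := hεlt.trans_le (min_le_right _ _)
  exact (setIntegral_rieszKernel_trapezoid_sdiff_axisDisk hα hβ hβT hε (by linarith)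
    (by linarith)).symm

theorem sq_div_le_ray (β a t : ℝ) : a ^ 2 / (1 + β ^ 2) ≤ (a - β * t) ^ 2 + t ^ 2 := by
  rw [div_le_iff₀ (by positivity)]
  linarith [sq_nonneg ((1 + β ^ 2) * t - a * β)]

theorem hasDerivAt_trapezoidVelocity (hα : 0 < α) (ha : 0 < a) (haM : a < M) :
    HasDerivAt (trapezoidVelocity α β T M)
      ((∫ t in Set.Ioc 0 T, rieszKernel α (a - β * t) t) -
        ∫ t in Set.Ioc 0 T, rieszKernel α (a - M) t) a := by
  have hray {b : ℝ} : ∀ᵐ t ∂volume.restrict (Set.Ioc 0 T),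
      (b / √(1 + β ^ 2)) ^ 2 ≤ (b - β * t) ^ 2 + t ^ 2 := by
    refine .of_forall fun t ↦ ?_
    rw [div_pow, sq_sqrt (by positivity)]
    exact sq_div_le_ray β b t
  have hedge {b : ℝ} : ∀ᵐ t ∂volume.restrict (Set.Ioc 0 T),
      (M - b) ^ 2 ≤ (b - M) ^ 2 + t ^ 2 :=
    .of_forall fun t ↦ by rw [sub_sq_comm M]; exact le_add_of_nonneg_right (sq_nonneg t)
  have hderiv := (hasDerivAt_integral_rieszPotential hα (by fun_prop) (by fun_prop)
    (by positivity) hray).sub (hasDerivAt_integral_rieszPotential hα (by fun_prop) (by fun_prop)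
    (sub_pos.2 haM) hedge)
  refine hderiv.congr_of_eventuallyEq ?_
  filter_upwards [Ioo_mem_nhds ha haM] with b ⟨hb, hbM⟩
  exact integral_sub
    (integrable_rieszPotential_of_far hα.le (by fun_prop) (by fun_prop) (by positivity) hray)
    (integrable_rieszPotential_of_far hα.le (by fun_prop) (by fun_prop) (sub_pos.2 hbM) hedge)

end Trapezoid

section Ray

/-- The integrand to which `rieszKernel_ray` reduces the kernel along the ray `y₁ = β y₂`. The
variable `u` is the tangent of the angle at `(a, 0)` from the perpendicular to the ray, so that
`u = -β` is the vertex of the wedge. -/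
noncomputable def rayProfile (α β u : ℝ) : ℝ :=
  (1 - β * u) * (1 + u ^ 2) ^ (-(1 + α / 2))

/-- The primitive of `rayProfile` that gives rise to the two terms of `F`. -/
noncomputable def rayPrimitive (α β u : ℝ) : ℝ :=
  (∫ θ in (-arctan β)..(arctan u), cos θ ^ α) + β / α * (1 + u ^ 2) ^ (-(α / 2))

variable {α β a t T c M : ℝ}

theorem cos_arctan_rpow (u : ℝ) : cos (arctan u) ^ α = (1 + u ^ 2) ^ (-(α / 2)) := by
  have hu : 0 ≤ 1 + u ^ 2 := by positivity
  rw [cos_arctan, sqrt_eq_rpow, one_div, ← rpow_neg hu, ← rpow_mul hu]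
  ring_nf

theorem hasDerivAt_integral_cos_rpow_arctan (hα : 0 ≤ α) (c u : ℝ) :
    HasDerivAt (fun u ↦ ∫ θ in c..(arctan u), cos θ ^ α) ((1 + u ^ 2) ^ (-(1 + α / 2))) u := by
  have hcont : Continuous fun θ ↦ cos θ ^ α := continuous_cos.rpow_const fun _ ↦ .inr hα
  refine ((hcont.integral_hasStrictDerivAt c (arctan u)).hasDerivAt.comp u
    (hasDerivAt_arctan u)).congr_deriv ?_
  have hu : 0 < 1 + u ^ 2 := by positivity
  rw [cos_arctan_rpow, one_div, ← rpow_neg_one, ← rpow_add hu]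
  ring_nf

theorem hasDerivAt_rayPrimitive (hα : 0 < α) (u : ℝ) :
    HasDerivAt (rayPrimitive α β) (rayProfile α β u) u := by
  have hpow := hasDerivAt_sq_add_sq_rpow (x := u) (t := 1) (p := -(α / 2)) (by positivity)
  simp only [one_pow, add_comm _ (1 : ℝ)] at hpow
  refine ((hasDerivAt_integral_cos_rpow_arctan hα.le (-arctan β) u).add
    (hpow.const_mul (β / α))).congr_deriv ?_
  rw [rayProfile, show -(α / 2) - 1 = -(1 + α / 2) by ring]
  field_simp
  ring

theorem tendsto_rayPrimitive_atTop (hα : 0 < α) :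
    Tendsto (rayPrimitive α β) atTop (𝓝 (∫ θ in (-arctan β)..(π / 2), cos θ ^ α)) := by
  have hcont : Continuous fun θ ↦ cos θ ^ α := continuous_cos.rpow_const fun _ ↦ .inr hα.le
  have hangle : Tendsto (fun u ↦ ∫ θ in (-arctan β)..(arctan u), cos θ ^ α) atTop
      (𝓝 (∫ θ in (-arctan β)..(π / 2), cos θ ^ α)) :=
    ((intervalIntegral.continuous_primitive (fun _ _ ↦ hcont.intervalIntegrable _ _) _).tendsto
      _).comp (tendsto_arctan_atTop.mono_right nhdsWithin_le_nhds)
  have hpow : Tendsto (fun u : ℝ ↦ (1 + u ^ 2) ^ (-(α / 2))) atTop (𝓝 0) :=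
    (tendsto_rpow_neg_atTop (half_pos hα)).comp
      (tendsto_atTop_add_const_left _ 1 (tendsto_pow_atTop two_ne_zero))
  have hsum := hangle.add (hpow.const_mul (β / α))
  rw [mul_zero, add_zero] at hsum
  exact hsum

theorem rayPrimitive_neg_self : rayPrimitive α β (-β) = β / α * (1 + β ^ 2) ^ (-(α / 2)) := by
  rw [rayPrimitive, arctan_neg, intervalIntegral.integral_same, zero_add, neg_sq]

theorem integrable_rayProfile (hα : 0 < α) : Integrable (rayProfile α β) := by
  have hmaj : Integrable fun u : ℝ ↦ (1 + |β|) * (1 + ‖u‖ ^ 2) ^ (-(1 + α) / 2) :=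
    (integrable_rpow_neg_one_add_norm_sq
      (by simpa only [Module.finrank_self, Nat.cast_one] using by linarith)).const_mul _
  refine hmaj.mono' (by unfold rayProfile; fun_prop) (.of_forall fun u ↦ ?_)
  have hu : 0 < 1 + u ^ 2 := by positivity
  have hone : 1 ≤ √(1 + u ^ 2) := one_le_sqrt.2 (le_add_of_nonneg_right (sq_nonneg u))
  have hself : |u| ≤ √(1 + u ^ 2) := abs_le_sqrt (le_add_of_nonneg_left zero_le_one)
  have hlin : |1 - β * u| ≤ (1 + |β|) * √(1 + u ^ 2) := by
    calc |1 - β * u| ≤ 1 + |β| * |u| := by simpa only [abs_one, abs_mul] using abs_sub 1 (β * u)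
      _ ≤ √(1 + u ^ 2) + |β| * √(1 + u ^ 2) := by gcongr
      _ = (1 + |β|) * √(1 + u ^ 2) := by ring
  calc ‖rayProfile α β u‖ = |1 - β * u| * (1 + u ^ 2) ^ (-(1 + α / 2)) := by
        rw [rayProfile, norm_mul, norm_eq_abs, norm_of_nonneg (by positivity)]
    _ ≤ (1 + |β|) * (1 + u ^ 2) ^ (1 / 2 : ℝ) * (1 + u ^ 2) ^ (-(1 + α / 2)) := by
        rw [← sqrt_eq_rpow]
        gcongr
    _ = (1 + |β|) * (1 + ‖u‖ ^ 2) ^ (-(1 + α) / 2) := by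
        rw [mul_assoc, ← rpow_add hu, norm_eq_abs, sq_abs]
        ring_nf

theorem rieszKernel_ray (ha : 0 < a) (β t : ℝ) :
    rieszKernel α (a - β * t) t = a ^ (-(1 + α)) * (1 + β ^ 2) ^ (α / 2) *
      rayProfile α β ((1 + β ^ 2) / a * t - β) := by
  set u := (1 + β ^ 2) / a * t - β with hu
  have hb : 0 < 1 + β ^ 2 := by positivity
  have hlin : a - β * t = a * (1 - β * u) / (1 + β ^ 2) := by
    rw [hu]
    field_simp
    ring
  have hquad : (a - β * t) ^ 2 + t ^ 2 = a ^ 2 * ((1 + u ^ 2) / (1 + β ^ 2)) := by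
    rw [hu]
    field_simp
    ring
  have hscale : (a ^ 2) ^ (-(1 + α / 2)) * a = a ^ (-(1 + α)) := by
    rw [← rpow_natCast_mul ha.le, ← rpow_add_one ha.ne']
    push_cast
    ring_nf
  have hslope : ((1 + β ^ 2) ^ (-(1 + α / 2)))⁻¹ / (1 + β ^ 2) = (1 + β ^ 2) ^ (α / 2) := by
    rw [rpow_neg hb.le, inv_inv, ← rpow_sub_one hb.ne']
    ring_nf
  rw [rieszKernel, hquad, hlin, div_eq_mul_inv, ← rpow_neg (by positivity),
    mul_rpow (by positivity) (by positivity), div_rpow (by positivity) hb.le, rayProfile,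
    ← hscale, ← hslope]
  ring

theorem integrable_rieszKernel_ray (hα : 0 < α) (ha : 0 < a) :
    Integrable fun t ↦ rieszKernel α (a - β * t) t := by
  simp only [rieszKernel_ray ha]
  exact (((integrable_rayProfile hα).comp_sub_right β).comp_mul_left' (by positivity)).const_mul _

theorem integral_Ioi_rayProfile_comp (hα : 0 < α) {k : ℝ} (hk : 0 < k) :
    ∫ t in Set.Ioi 0, rayProfile α β (k * t - β) =
      ((∫ θ in (-arctan β)..(π / 2), cos θ ^ α) - β / α * (1 + β ^ 2) ^ (-(α / 2))) / k := by
  have hinner (t : ℝ) : HasDerivAt (fun t ↦ k * t - β) k t := by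
    simpa only [id, mul_one] using ((hasDerivAt_id t).const_mul k).sub_const β
  have htop : Tendsto (fun t ↦ k * t - β) atTop atTop :=
    tendsto_atTop_add_const_right _ _ (tendsto_id.const_mul_atTop hk)
  have hftc := integral_Ioi_of_hasDerivAt_of_tendsto' (a := 0)
    (fun t _ ↦ (hasDerivAt_rayPrimitive (β := β) hα (k * t - β)).comp t (hinner t))
    ((((integrable_rayProfile hα).comp_sub_right β).comp_mul_left' hk.ne').mul_const
      k).integrableOn
    ((tendsto_rayPrimitive_atTop hα).comp htop)
  rw [integral_mul_const, Function.comp_apply, mul_zero, zero_sub, rayPrimitive_neg_self] at hftc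
  exact eq_div_of_mul_eq hk.ne' hftc

theorem integral_Ioi_rieszKernel_ray (hα : 0 < α) (ha : 0 < a) :
    ∫ t in Set.Ioi 0, rieszKernel α (a - β * t) t = -(F α β / (α * a ^ α)) := by
  have hb : 0 < 1 + β ^ 2 := by positivity
  simp only [rieszKernel_ray ha]
  rw [integral_const_mul, integral_Ioi_rayProfile_comp hα (by positivity), F,
    add_comm (β ^ 2), neg_add, rpow_add ha, rpow_neg_one, rpow_neg ha.le, rpow_neg hb.le,
    rpow_sub hb, rpow_one]
  field_simp
  ring

theorem abs_integral_Ioi_rieszKernel_le {x : ℝ → ℝ} (hα : 0 < α) (hT : 0 < T) (hc : 0 < c)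
    (hfar : ∀ t > T, (c * t) ^ 2 ≤ x t ^ 2 + t ^ 2) :
    |∫ t in Set.Ioi T, rieszKernel α (x t) t| ≤ c ^ (-(1 + α)) * (T ^ (-α) / α) := by
  have hmaj : IntegrableOn (fun t ↦ c ^ (-(1 + α)) * t ^ (-(1 + α))) (Set.Ioi T) :=
    (integrableOn_Ioi_rpow_of_lt (by linarith) hT).const_mul _
  have hle : ∀ᵐ t ∂volume.restrict (Set.Ioi T),
      ‖rieszKernel α (x t) t‖ ≤ c ^ (-(1 + α)) * t ^ (-(1 + α)) := by
    filter_upwards [ae_restrict_mem measurableSet_Ioi] with t ht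
    have ht0 : 0 < t := hT.trans ht
    rw [← mul_rpow hc.le ht0.le]
    exact abs_rieszKernel_le (by linarith) (by positivity) (hfar t ht)
  refine (norm_integral_le_of_norm_le hmaj hle).trans_eq ?_
  rw [integral_const_mul, integral_Ioi_rpow_of_lt (by linarith) hT,
    show -(1 + α) + 1 = -α by ring, neg_div_neg_eq]

theorem sq_le_ray_of_lt (haM : a ≤ M / 2) (hM : 0 < M) (ht : M / max 1 β < t) :
    (max 1 β / 2 * t) ^ 2 ≤ (a - β * t) ^ 2 + t ^ 2 := by
  have hm : 0 < max 1 β := zero_lt_one.trans_le (le_max_left _ _)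
  have ht0 : 0 < t := (div_pos hM hm).trans ht
  have hMt : M < t * max 1 β := (div_lt_iff₀ hm).1 ht
  rcases le_total β 1 with hβ | hβ
  · rw [max_eq_left hβ]
    nlinarith [sq_nonneg (a - β * t), sq_nonneg t]
  · rw [max_eq_right hβ] at hMt ⊢
    have hdist : β / 2 * t ≤ β * t - a := by linarith
    calc (β / 2 * t) ^ 2 ≤ (β * t - a) ^ 2 := by gcongr
      _ ≤ (a - β * t) ^ 2 + t ^ 2 := by
        rw [sub_sq_comm]
        exact le_add_of_nonneg_right (sq_nonneg t)

theorem abs_integral_Ioc_rieszKernel_ray_add_le (hα : 0 < α) (ha : 0 < a) (haM : a ≤ M / 2) :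
    |(∫ t in Set.Ioc 0 (M / max 1 β), rieszKernel α (a - β * t) t) + F α β / (α * a ^ α)| ≤
      2 ^ (1 + α) / α * (1 / M ^ α) := by
  set γ := max 1 β
  have hγ : 1 ≤ γ := le_max_left _ _
  have hM : 0 < M := by linarith
  have hT : 0 < M / γ := by positivity
  have hsplit := setIntegral_union Set.Ioc_disjoint_Ioi_same measurableSet_Ioi
    (integrable_rieszKernel_ray (β := β) hα ha).integrableOn
    (integrable_rieszKernel_ray (β := β) hα ha).integrableOn (s := Set.Ioc 0 (M / γ))
  rw [Set.Ioc_union_Ioi_eq_Ioi hT.le, integral_Ioi_rieszKernel_ray hα ha] at hsplit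
  have htail := abs_integral_Ioi_rieszKernel_le hα hT (by positivity : 0 < γ / 2)
    fun t ht ↦ sq_le_ray_of_lt (β := β) haM hM ht
  rw [eq_sub_of_add_eq hsplit.symm, sub_add_eq_add_sub, neg_add_cancel, zero_sub, abs_neg]
  refine htail.trans ?_
  calc (γ / 2) ^ (-(1 + α)) * ((M / γ) ^ (-α) / α)
      = 2 ^ (1 + α) / α * (1 / M ^ α) * γ⁻¹ := by
        rw [div_rpow hM.le (by positivity), div_rpow (by positivity) zero_le_two,
          rpow_neg zero_le_two, neg_add, rpow_add (by positivity), rpow_neg_one, rpow_neg hM.le α]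
        field_simp
    _ ≤ 2 ^ (1 + α) / α * (1 / M ^ α) :=
        mul_le_of_le_one_right (by positivity) (inv_le_one_of_one_le₀ hγ)

end Ray

section Patch

/-- The velocity induced at `(a, 0)` by a patch `S` at positive distance from that point. -/
noncomputable def farVelocity (α : ℝ) (S : Set (ℝ × ℝ)) (a : ℝ) : ℝ :=
  ∫ y in S, rieszKernel α (a - y.1) y.2

/-- The derivative of `farVelocity α S` at `a`. -/
noncomputable def farVelocityDeriv (α : ℝ) (S : Set (ℝ × ℝ)) (a : ℝ) : ℝ :=
  ∫ y in S, rieszKernelDeriv α (a - y.1) y.2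

/-- The wedge `0 < y₁`, `0 < y₂`, `β y₂ < y₁` cut off by the square `[-M, M]²`; the height at which
the ray `y₁ = β y₂` leaves the square is `M / max 1 β`. -/
def wedgePatch (β M : ℝ) : Set (ℝ × ℝ) :=
  trapezoid β (M / max 1 β) M

/-- The velocity induced at `(a, 0)` by a patch `Ω` that agrees with `wedgePatch β M` in the square
`[-M, M]²` outside the disk of radius `δ` centered at the origin. -/
noncomputable def patchVelocity (α β M δ : ℝ) (Ω : Set (ℝ × ℝ)) (a : ℝ) : ℝ :=
  farVelocity α (Ω ∩ axisDisk 0 δ) a + farVelocity α (Ω \ centeredSquare M) a +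
    (trapezoidVelocity α β (M / max 1 β) M a - farVelocity α (wedgePatch β M ∩ axisDisk 0 δ) a)

/-- The derivative of `patchVelocity α β M δ Ω` at `a`. The two integrals over heights are the
boundary terms of the wedge along the ray and along the right side of the square. -/
noncomputable def patchVelocityDeriv (α β M δ : ℝ) (Ω : Set (ℝ × ℝ)) (a : ℝ) : ℝ :=
  farVelocityDeriv α (Ω ∩ axisDisk 0 δ) a + farVelocityDeriv α (Ω \ centeredSquare M) a +
    ((∫ t in Set.Ioc 0 (M / max 1 β), rieszKernel α (a - β * t) t) -
      (∫ t in Set.Ioc 0 (M / max 1 β), rieszKernel α (a - M) t) -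
      farVelocityDeriv α (wedgePatch β M ∩ axisDisk 0 δ) a)

variable {α β M δ a r : ℝ} {S Ω : Set (ℝ × ℝ)} {y : ℝ × ℝ}

theorem measurableSet_centeredSquare : MeasurableSet (centeredSquare M) :=
  measurableSet_Icc.prod measurableSet_Icc

theorem hasDerivAt_farVelocity (hα : 0 ≤ α) (hr : 0 < r) (hS : MeasurableSet S)
    (hSv : volume S ≠ ⊤) (hfar : ∀ y ∈ S, r ^ 2 ≤ (a - y.1) ^ 2 + y.2 ^ 2) :
    HasDerivAt (farVelocity α S) (farVelocityDeriv α S a) a := by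
  have : IsFiniteMeasure (volume.restrict S) := isFiniteMeasure_restrict.2 hSv
  exact hasDerivAt_integral_rieszKernel hα measurable_fst measurable_snd hr
    (ae_restrict_of_forall_mem hS hfar)

theorem abs_farVelocityDeriv_le {A : ℝ} (hα : 0 ≤ α) (hr : 0 < r) (hA : 0 ≤ A)
    (hS : MeasurableSet S) (hSv : volume S ≤ ENNReal.ofReal A)
    (hfar : ∀ y ∈ S, r ^ 2 ≤ (a - y.1) ^ 2 + y.2 ^ 2) :
    |farVelocityDeriv α S a| ≤ (1 + α) * r ^ (-(2 + α)) * A := by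
  have : IsFiniteMeasure (volume.restrict S) :=
    isFiniteMeasure_restrict.2 (hSv.trans_lt ENNReal.ofReal_lt_top).ne
  refine (abs_integral_rieszKernelDeriv_le hα hr (ae_restrict_of_forall_mem hS hfar)).trans ?_
  rw [measureReal_restrict_apply_univ]
  gcongr
  exact ENNReal.toReal_le_of_le_ofReal hA hSv

theorem sq_half_le_of_mem_axisDisk (hδ : 0 ≤ δ) (hδa : 2 * δ ≤ a) (hy : y ∈ axisDisk 0 δ) :
    (a / 2) ^ 2 ≤ (a - y.1) ^ 2 + y.2 ^ 2 := by
  have hy' : (y.1 - 0) ^ 2 + y.2 ^ 2 ≤ δ ^ 2 := hy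
  have hy₁ : y.1 - 0 ≤ δ :=
    abs_le_of_sq_le_sq' ((le_add_of_nonneg_right (sq_nonneg _)).trans hy') hδ |>.2
  have hdist : a / 2 ≤ a - y.1 := by linarith
  calc (a / 2) ^ 2 ≤ (a - y.1) ^ 2 := pow_le_pow_left₀ (by linarith) hdist 2
    _ ≤ (a - y.1) ^ 2 + y.2 ^ 2 := le_add_of_nonneg_right (sq_nonneg _)

theorem sq_half_le_of_notMem_centeredSquare (ha : 0 ≤ a) (haM : a ≤ M / 2)
    (hy : y ∉ centeredSquare M) : (M / 2) ^ 2 ≤ (a - y.1) ^ 2 + y.2 ^ 2 := by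
  have hM : 0 ≤ M / 2 := ha.trans haM
  rw [centeredSquare, Set.mem_prod, Set.mem_Icc, Set.mem_Icc, ← abs_le, ← abs_le, not_and_or,
    not_le, not_le] at hy
  rcases hy with hy | hy
  · have hdist : M / 2 ≤ |a - y.1| := by
      rw [abs_sub_comm]
      linarith [abs_sub_abs_le_abs_sub y.1 a, abs_of_nonneg ha]
    calc (M / 2) ^ 2 ≤ |a - y.1| ^ 2 := by gcongr
      _ ≤ (a - y.1) ^ 2 + y.2 ^ 2 := by
        rw [sq_abs]
        exact le_add_of_nonneg_right (sq_nonneg _)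
  · calc (M / 2) ^ 2 ≤ |y.2| ^ 2 := by gcongr; linarith
      _ ≤ (a - y.1) ^ 2 + y.2 ^ 2 := by
        rw [sq_abs]
        exact le_add_of_nonneg_left (sq_nonneg _)

theorem mem_wedgePatch_iff (hβ : 0 ≤ β) :
    y ∈ wedgePatch β M ↔ (0 < y.1 ∧ 0 < y.2 ∧ β * y.2 < y.1) ∧ y ∈ centeredSquare M := by
  have hheight : y.2 ≤ M / max 1 β ↔ y.2 * max 1 β ≤ M :=
    le_div_iff₀ (zero_lt_one.trans_le (le_max_left _ _))
  simp only [wedgePatch, trapezoid, centeredSquare, Set.mem_ofPred_eq, Set.mem_prod, Set.mem_Ioc,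
    Set.mem_Icc, hheight]
  constructor
  · rintro ⟨⟨hy₂, hyT⟩, hyβ, hyM⟩
    have hy₁ : 0 < y.1 := (mul_nonneg hβ hy₂.le).trans_lt hyβ
    have hyM' : y.2 ≤ M := (le_mul_of_one_le_right hy₂.le (le_max_left _ _)).trans hyT
    exact ⟨⟨hy₁, hy₂, hyβ⟩, ⟨by linarith, hyM⟩, by linarith, hyM'⟩
  · rintro ⟨⟨-, hy₂, hyβ⟩, ⟨-, hyM⟩, -, hyM'⟩
    refine ⟨⟨hy₂, ?_⟩, hyβ, hyM⟩
    rw [mul_max_of_nonneg _ _ hy₂.le, mul_one, mul_comm]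
    exact max_le hyM' (hyβ.le.trans hyM)

theorem measurableSet_wedgePatch : MeasurableSet (wedgePatch β M) :=
  measurableSet_trapezoid

theorem sdiff_axisDisk_eq_of_inter_eq (hβ : 0 ≤ β)
    (hΩ : Ω ∩ {x : ℝ × ℝ | x.1 ∈ Set.Icc (-M) M ∧ x.2 ∈ Set.Icc (-M) M ∧
        δ ^ 2 < x.1 ^ 2 + x.2 ^ 2} =
      {x : ℝ × ℝ | 0 < x.1 ∧ 0 < x.2 ∧ β * x.2 < x.1} ∩
        {x : ℝ × ℝ | x.1 ∈ Set.Icc (-M) M ∧ x.2 ∈ Set.Icc (-M) M ∧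
          δ ^ 2 < x.1 ^ 2 + x.2 ^ 2}) :
    (Ω ∩ centeredSquare M) \ axisDisk 0 δ = wedgePatch β M \ axisDisk 0 δ := by
  have hann : {x : ℝ × ℝ | x.1 ∈ Set.Icc (-M) M ∧ x.2 ∈ Set.Icc (-M) M ∧
      δ ^ 2 < x.1 ^ 2 + x.2 ^ 2} = centeredSquare M \ axisDisk 0 δ := by
    ext x
    simp only [centeredSquare, axisDisk, Set.mem_sdiff, Set.mem_prod, Set.mem_ofPred_eq, sub_zero,
      not_le, and_assoc]
  have hwedge : wedgePatch β M = {x | 0 < x.1 ∧ 0 < x.2 ∧ β * x.2 < x.1} ∩ centeredSquare M := by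
    ext x
    exact mem_wedgePatch_iff hβ
  rw [hann, ← Set.inter_sdiff_assoc, ← Set.inter_sdiff_assoc, ← hwedge] at hΩ
  exact hΩ

theorem eq_union_of_sdiff_eq_wedgePatch_sdiff (hδM : |δ| ≤ M)
    (hΩ : (Ω ∩ centeredSquare M) \ axisDisk 0 δ = wedgePatch β M \ axisDisk 0 δ) :
    Ω = Ω ∩ axisDisk 0 δ ∪ Ω \ centeredSquare M ∪
      wedgePatch β M \ (wedgePatch β M ∩ axisDisk 0 δ) := by
  rw [Set.sdiff_self_inter, ← hΩ]
  ext y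
  have hDQ : y ∈ axisDisk 0 δ → y ∈ centeredSquare M :=
    fun hy ↦ axisDisk_zero_subset_centeredSquare hδM hy
  simp only [Set.mem_union, Set.mem_inter_iff, Set.mem_sdiff]
  tauto

theorem hasPrincipalValue_inter_axisDisk (hδ : 0 < δ) (hδa : 2 * δ ≤ a) :
    HasPrincipalValue α (S ∩ axisDisk 0 δ) a (farVelocity α (S ∩ axisDisk 0 δ) a) :=
  hasPrincipalValue_of_far (by linarith : 0 < a / 2)
    fun _ hy ↦ sq_half_le_of_mem_axisDisk hδ.le hδa hy.2

theorem hasPrincipalValue_wedgePatch (hα : 0 < α) (hβ : 0 ≤ β) (ha : 0 < a) (haM : a < M) :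
    HasPrincipalValue α (wedgePatch β M) a (trapezoidVelocity α β (M / max 1 β) M a) := by
  refine hasPrincipalValue_trapezoid hα hβ ?_ ha haM
  rw [mul_div_left_comm]
  exact mul_le_of_le_one_right (ha.trans haM).le
    (div_le_one_of_le₀ (le_max_right _ _) (by positivity))

theorem hasPrincipalValue_patchVelocity (hα : 0 < α) (hβ : 0 ≤ β) (hδ : 0 < δ) (hδa : 2 * δ ≤ a)
    (haM : a ≤ M / 2) (hΩm : MeasurableSet Ω) (hΩv : volume Ω ≠ ⊤)
    (hΩ : (Ω ∩ centeredSquare M) \ axisDisk 0 δ = wedgePatch β M \ axisDisk 0 δ) :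
    HasPrincipalValue α Ω a (patchVelocity α β M δ Ω a) := by
  have hα' : -1 ≤ α := by linarith
  have ha : 0 < a := by linarith
  have hP : volume (wedgePatch β M) ≠ ⊤ := volume_trapezoid_ne_top hβ
  have houter : HasPrincipalValue α (Ω \ centeredSquare M) a
      (farVelocity α (Ω \ centeredSquare M) a) :=
    hasPrincipalValue_of_far (by linarith : 0 < M / 2)
      fun _ hy ↦ sq_half_le_of_notMem_centeredSquare ha.le haM hy.2
  have hcore : MeasurableSet (wedgePatch β M ∩ axisDisk 0 δ) :=
    measurableSet_wedgePatch.inter (measurableSet_axisDisk 0 δ)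
  have hwedge := (hasPrincipalValue_wedgePatch hα hβ ha (by linarith)).sdiff
    (hasPrincipalValue_inter_axisDisk hδ hδa) hα' Set.inter_subset_left hcore hP
  have hδM : |δ| ≤ M := by
    rw [abs_of_pos hδ]
    linarith
  have hdisj : Disjoint (Ω ∩ axisDisk 0 δ) (Ω \ centeredSquare M) :=
    Set.disjoint_left.2 fun _ hy hy' ↦ hy'.2 (axisDisk_zero_subset_centeredSquare hδM hy.2)
  have hdisj' : Disjoint (Ω ∩ axisDisk 0 δ ∪ Ω \ centeredSquare M)
      (wedgePatch β M \ (wedgePatch β M ∩ axisDisk 0 δ)) := by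
    rw [Set.sdiff_self_inter]
    exact Set.disjoint_left.2 fun _ hy hy' ↦ hy.elim (fun h ↦ hy'.2 h.2)
      fun h ↦ h.2 ((mem_wedgePatch_iff hβ).1 hy'.1).2
  have hunion := ((hasPrincipalValue_inter_axisDisk hδ hδa).union houter hα' hdisj
    (hΩm.diff measurableSet_centeredSquare)
    (measure_ne_top_of_subset Set.inter_subset_left hΩv)
    (measure_ne_top_of_subset Set.sdiff_subset hΩv)).union hwedge hα' hdisj'
    (measurableSet_wedgePatch.diff hcore)
    (measure_ne_top_of_subset (Set.union_subset Set.inter_subset_left Set.sdiff_subset) hΩv)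
    (measure_ne_top_of_subset Set.sdiff_subset hP)
  rwa [← eq_union_of_sdiff_eq_wedgePatch_sdiff hδM hΩ] at hunion

theorem hasDerivAt_patchVelocity (hα : 0 < α) (hβ : 0 ≤ β) (hδ : 0 < δ) (hδa : 2 * δ ≤ a)
    (haM : a ≤ M / 2) (hΩm : MeasurableSet Ω) (hΩv : volume Ω ≠ ⊤) :
    HasDerivAt (patchVelocity α β M δ Ω) (patchVelocityDeriv α β M δ Ω a) a := by
  have ha : 0 < a := by linarith
  have hinner {S : Set (ℝ × ℝ)} (hS : MeasurableSet S) (hSv : volume S ≠ ⊤) :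
      HasDerivAt (farVelocity α (S ∩ axisDisk 0 δ)) (farVelocityDeriv α (S ∩ axisDisk 0 δ) a) a :=
    hasDerivAt_farVelocity hα.le (half_pos ha) (hS.inter (measurableSet_axisDisk 0 δ))
      (measure_ne_top_of_subset Set.inter_subset_left hSv)
      fun y hy ↦ sq_half_le_of_mem_axisDisk hδ.le hδa hy.2
  have houter := hasDerivAt_farVelocity hα.le (by linarith : 0 < M / 2)
    (hΩm.diff measurableSet_centeredSquare) (measure_ne_top_of_subset Set.sdiff_subset hΩv)
    fun y hy ↦ sq_half_le_of_notMem_centeredSquare ha.le haM hy.2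
  exact ((hinner hΩm hΩv).add houter).add
    ((hasDerivAt_trapezoidVelocity hα ha (by linarith)).sub
      (hinner measurableSet_wedgePatch (volume_trapezoid_ne_top hβ)))

theorem half_rpow_neg {x : ℝ} (hx : 0 ≤ x) (p : ℝ) : (x / 2) ^ (-p) = 2 ^ p * x ^ (-p) := by
  rw [div_rpow hx zero_le_two, rpow_neg zero_le_two, div_inv_eq_mul, mul_comm]

theorem abs_farVelocityDeriv_inter_axisDisk_le (hα : 0 ≤ α) (hδ : 0 < δ) (hδa : 2 * δ ≤ a)
    (hS : MeasurableSet S) :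
    |farVelocityDeriv α (S ∩ axisDisk 0 δ) a| ≤
      4 * ((1 + α) * 2 ^ (2 + α)) * (δ ^ 2 / a ^ (2 + α)) := by
  have ha : 0 < a := by linarith
  refine (abs_farVelocityDeriv_le hα (half_pos ha) (by positivity : 0 ≤ 4 * δ ^ 2)
    (hS.inter (measurableSet_axisDisk 0 δ))
    ((measure_mono Set.inter_subset_right).trans volume_axisDisk_zero_le)
    fun y hy ↦ sq_half_le_of_mem_axisDisk hδ.le hδa hy.2).trans_eq ?_
  rw [half_rpow_neg ha.le, rpow_neg ha.le]
  ring

theorem abs_farVelocityDeriv_sdiff_centeredSquare_le {K : ℝ} (hα : 0 ≤ α) (hK : 0 ≤ K) (ha : 0 < a)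
    (haM : a ≤ M / 2) (hS : MeasurableSet S) (hSv : volume S ≤ ENNReal.ofReal (K * M ^ 2)) :
    |farVelocityDeriv α (S \ centeredSquare M) a| ≤
      K * ((1 + α) * 2 ^ (2 + α)) * (1 / M ^ α) := by
  have hM : 0 < M := by linarith
  refine (abs_farVelocityDeriv_le hα (half_pos hM) (by positivity : 0 ≤ K * M ^ 2)
    (hS.diff measurableSet_centeredSquare) ((measure_mono Set.sdiff_subset).trans hSv)
    fun y hy ↦ sq_half_le_of_notMem_centeredSquare ha.le haM hy.2).trans_eq ?_
  rw [half_rpow_neg hM.le, rpow_neg hM.le, rpow_add hM, rpow_two]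
  field_simp

theorem abs_integral_rieszKernel_edge_le (hα : 0 ≤ α) (hM : 0 < M) (haM : a ≤ M / 2) :
    |∫ t in Set.Ioc 0 (M / max 1 β), rieszKernel α (a - M) t| ≤ 2 ^ (1 + α) * (1 / M ^ α) := by
  have hT : 0 ≤ M / max 1 β := by positivity
  have hedge : ∀ᵐ t ∂volume.restrict (Set.Ioc 0 (M / max 1 β)),
      (M / 2) ^ 2 ≤ (a - M) ^ 2 + t ^ 2 := by
    refine .of_forall fun t ↦ ?_
    rw [sub_sq_comm]
    calc (M / 2) ^ 2 ≤ (M - a) ^ 2 := by gcongr; linarith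
      _ ≤ (M - a) ^ 2 + t ^ 2 := le_add_of_nonneg_right (sq_nonneg t)
  have hbound := abs_integral_rieszKernel_le (by linarith) (half_pos hM) hedge (α := α)
  rw [measureReal_restrict_apply_univ, volume_real_Ioc_of_le hT, sub_zero] at hbound
  calc _ ≤ (M / 2) ^ (-(1 + α)) * (M / max 1 β) := hbound
    _ ≤ (M / 2) ^ (-(1 + α)) * M := by
        gcongr
        exact div_le_self hM.le (le_max_left _ _)
    _ = 2 ^ (1 + α) * (1 / M ^ α) := by
        rw [half_rpow_neg hM.le, rpow_neg hM.le, rpow_add hM, rpow_one]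
        field_simp

theorem abs_patchVelocityDeriv_add_le {K : ℝ} (hα : 0 < α) (hK : 0 ≤ K) (hδ : 0 < δ)
    (hδa : 2 * δ ≤ a) (haM : a ≤ M / 2) (hΩm : MeasurableSet Ω)
    (hΩv : volume Ω ≤ ENNReal.ofReal (K * M ^ 2)) :
    |patchVelocityDeriv α β M δ Ω a + F α β / (α * a ^ α)| ≤
      ((8 + K) * ((1 + α) * 2 ^ (2 + α)) + (1 + 1 / α) * 2 ^ (1 + α)) *
        (1 / M ^ α + δ ^ 2 / a ^ (2 + α)) := by
  have ha : 0 < a := by linarith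
  have hM : 0 < M := by linarith
  have hinner := abs_le.1 (abs_farVelocityDeriv_inter_axisDisk_le hα.le hδ hδa hΩm)
  have houter := abs_le.1 (abs_farVelocityDeriv_sdiff_centeredSquare_le hα.le hK ha haM hΩm hΩv)
  have hcore := abs_le.1 (abs_farVelocityDeriv_inter_axisDisk_le hα.le hδ hδa
    (measurableSet_wedgePatch (β := β) (M := M)))
  have hray := abs_le.1 (abs_integral_Ioc_rieszKernel_ray_add_le (β := β) hα ha haM)
  have hedge := abs_le.1 (abs_integral_rieszKernel_edge_le (β := β) hα.le hM haM)
  set A := (1 + α) * 2 ^ (2 + α)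
  set B : ℝ := 2 ^ (1 + α)
  set x := 1 / M ^ α
  set y := δ ^ 2 / a ^ (2 + α)
  have hcross : 0 ≤ 8 * A * x + (K * A + B + B / α) * y := by positivity
  have htotal : 4 * A * y + K * A * x + 4 * A * y + B / α * x + B * x ≤
      ((8 + K) * A + (1 + 1 / α) * B) * (x + y) := by
    linear_combination hcross
  rw [patchVelocityDeriv, abs_le]
  constructor <;> linarith

end Patch

theorem stmt16_general (α : ℝ) (hα0 : 0 < α) (K : ℝ) (hK : 0 ≤ K) :
    ∃ C : ℝ, 0 < C ∧ ∀ (β M δ : ℝ) (Ω₀ : Set (ℝ × ℝ)),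
      0 ≤ β → 0 < δ → MeasurableSet Ω₀ → volume Ω₀ ≤ ENNReal.ofReal (K * M ^ 2) →
      Ω₀ ∩ {x : ℝ × ℝ | x.1 ∈ Set.Icc (-M) M ∧ x.2 ∈ Set.Icc (-M) M ∧
          δ ^ 2 < x.1 ^ 2 + x.2 ^ 2} =
        {x : ℝ × ℝ | 0 < x.1 ∧ 0 < x.2 ∧ β * x.2 < x.1} ∩
          {x : ℝ × ℝ | x.1 ∈ Set.Icc (-M) M ∧ x.2 ∈ Set.Icc (-M) M ∧
            δ ^ 2 < x.1 ^ 2 + x.2 ^ 2} →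
      ∃ V V' : ℝ → ℝ,
        (∀ a ∈ Set.Icc (2 * δ) (M / 2), HasPrincipalValue α Ω₀ a (V a)) ∧
        ∀ a ∈ Set.Icc (2 * δ) (M / 2),
          HasDerivWithinAt V (V' a) (Set.Icc (2 * δ) (M / 2)) a ∧
          |V' a + F α β / (α * a ^ α)| ≤ C * (1 / M ^ α + δ ^ 2 / a ^ (2 + α)) := by
  refine ⟨(8 + K) * ((1 + α) * 2 ^ (2 + α)) + (1 + 1 / α) * 2 ^ (1 + α), by positivity,
    fun β M δ Ω₀ hβ hδ hΩm hΩv hΩ ↦ ?_⟩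
  have hfin : volume Ω₀ ≠ ⊤ := (hΩv.trans_lt ENNReal.ofReal_lt_top).ne
  refine ⟨patchVelocity α β M δ Ω₀, patchVelocityDeriv α β M δ Ω₀, fun a ⟨hδa, haM⟩ ↦ ?_,
    fun a ⟨hδa, haM⟩ ↦ ⟨?_, ?_⟩⟩
  · exact hasPrincipalValue_patchVelocity hα0 hβ hδ hδa haM hΩm hfin
      (sdiff_axisDisk_eq_of_inter_eq hβ hΩ)
  · exact (hasDerivAt_patchVelocity hα0 hβ hδ hδa haM hΩm hfin).hasDerivWithinAt
  · exact abs_patchVelocityDeriv_add_le hα0 hK hδ hδa haM hΩm hΩv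

theorem stmt16 (α : ℝ) (hα0 : 0 < α) (hα2 : α < 2) :
    ∃ C : ℝ, 0 < C ∧ ∀ (β M δ : ℝ) (Ω₀ : Set (ℝ × ℝ)),
      0 ≤ β → 0 < M → 0 < δ → δ ≤ M / 4 →
      IsOpen Ω₀ → Bornology.IsBounded Ω₀ →
      volume Ω₀ ≤ ENNReal.ofReal (100 * M ^ 2) →
      Ω₀ ∩ {x : ℝ × ℝ | x.1 ∈ Set.Icc (-M) M ∧ x.2 ∈ Set.Icc (-M) M ∧
          δ ^ 2 < x.1 ^ 2 + x.2 ^ 2} =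
        {x : ℝ × ℝ | 0 < x.1 ∧ 0 < x.2 ∧ β * x.2 < x.1} ∩
          {x : ℝ × ℝ | x.1 ∈ Set.Icc (-M) M ∧ x.2 ∈ Set.Icc (-M) M ∧
            δ ^ 2 < x.1 ^ 2 + x.2 ^ 2} →
      ∃ V V' : ℝ → ℝ,
        (∀ a ∈ Set.Icc (2 * δ) (M / 2),
          Filter.Tendsto
            (fun ε : ℝ => ∫ y in Ω₀ \ {y : ℝ × ℝ | (y.1 - a) ^ 2 + y.2 ^ 2 ≤ ε ^ 2},
              (a - y.1) / ((a - y.1) ^ 2 + y.2 ^ 2) ^ (1 + α / 2))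
            (nhdsWithin 0 (Set.Ioi 0)) (nhds (V a))) ∧
        ∀ a ∈ Set.Icc (2 * δ) (M / 2),
          HasDerivWithinAt V (V' a) (Set.Icc (2 * δ) (M / 2)) a ∧
          |V' a + F α β / (α * a ^ α)| ≤
            C * (1 / M ^ α + δ ^ 2 / a ^ (2 + α)) := by
  obtain ⟨C, hC, hpatch⟩ := stmt16_general α hα0 100 (by norm_num)
  exact ⟨C, hC, fun β M δ Ω₀ hβ _ hδ _ hopen _ ↦ hpatch β M δ Ω₀ hβ hδ hopen.measurableSet⟩
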